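/- arXiv:1306.5358 — 2 statements merged into one kernel-verified Lean document; each statement's English description precedes it below -/
import Mathlib

section
/- For a fixed n×n complex matrix B and 0 < p ≤ 1, the map A ↦ tr((B* A^p B)^{1/p}) is concave on positive definite n×n matrices; i.e., for positive definite A₀, A₁ and t ∈ [0,1], tr((B* ((1−t)A₀ + tA₁)^p B)^{1/p}) ≥ (1−t)·tr((B* A₀^p B)^{1/p}) + t·tr((B* A₁^p B)^{1/p}). -/
open Matrix ComplexOrder

/-- Functional calculus for Hermitian matrices: apply `f` to the eigenvalues. -/
noncomputable def mfun {m : Type*} [Fintype m] [DecidableEq m] (f : ℝ → ℝ)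
    (A : Matrix m m ℂ) : Matrix m m ℂ :=
  if hA : A.IsHermitian then
    (hA.eigenvectorUnitary : Matrix m m ℂ) *
      Matrix.diagonal (fun i => (f (hA.eigenvalues i) : ℂ)) *
      (star (hA.eigenvectorUnitary : Matrix m m ℂ))
  else 0

/-- Real matrix power via the functional calculus. -/
noncomputable def mpow {m : Type*} [Fintype m] [DecidableEq m]
    (A : Matrix m m ℂ) (p : ℝ) : Matrix m m ℂ :=
  mfun (fun x => x ^ p) A

/-!
Lieb's concavity theorem says that `(A, Y) ↦ tr (Kᴴ A ^ p K Y ^ (1 - p))` is jointly concave: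
writing `a ^ p y ^ (1 - p)` as an integral over `t` of nonnegative multiples of the parallel sums
`a (t y) / (a + t y)` reduces it to the parallel sum of left multiplication by `A` and right
multiplication by `t Y`, whose quadratic form at `K` is an infimum of real-linear functions of
`(A, Y)`. By Young's trace inequality, `p tr X ^ (1 / p)` is the maximum over `Y ≥ 0` of
`tr (X Y ^ (1 - p)) - (1 - p) tr Y`. For `X = Bᴴ A ^ p B` this exhibits
`p tr (Bᴴ A ^ p B) ^ (1 / p)` as a partial maximum of a jointly concave function of `(A, Y)`.
-/

open Set MeasureTheory
open scoped MatrixOrder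

section Concavity

variable {E F ι : Type*} [AddCommMonoid E] [SMul ℝ E] [AddCommMonoid F] [SMul ℝ F]

lemma concaveOn_ciInf [Nonempty ι] {s : Set E} {f : ι → E → ℝ} (hs : Convex ℝ s)
    (hf : ∀ i, ConcaveOn ℝ s (f i)) (hbdd : ∀ x ∈ s, BddBelow (range fun i => f i x)) :
    ConcaveOn ℝ s fun x => ⨅ i, f i x := by
  refine ⟨hs, fun x hx y hy a b ha hb hab => le_ciInf fun i => ?_⟩
  calc a • (⨅ i, f i x) + b • ⨅ i, f i y ≤ a • f i x + b • f i y := by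
        gcongr
        exacts [ciInf_le (hbdd x hx) i, ciInf_le (hbdd y hy) i]
    _ ≤ f i (a • x + b • y) := (hf i).2 hx hy ha hb hab

lemma concaveOn_of_forall_isGreatest {s : Set E} {t : Set F} {f : E × F → ℝ} {g : E → ℝ}
    (hs : Convex ℝ s) (hf : ConcaveOn ℝ (s ×ˢ t) f)
    (hg : ∀ x ∈ s, IsGreatest ((fun y => f (x, y)) '' t) (g x)) : ConcaveOn ℝ s g := by
  refine ⟨hs, fun x hx x' hx' a b ha hb hab => ?_⟩
  obtain ⟨y, hy, hxy⟩ := (hg x hx).1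
  obtain ⟨y', hy', hxy'⟩ := (hg x' hx').1
  rw [← hxy, ← hxy']
  have hmem := hf.1 (mk_mem_prod hx hy) (mk_mem_prod hx' hy') ha hb hab
  exact (hf.2 (mk_mem_prod hx hy) (mk_mem_prod hx' hy') ha hb hab).trans
    ((hg _ hmem.1).2 (mem_image_of_mem _ hmem.2))

lemma convex_setOf_posSemidef {m : Type*} : Convex ℝ {A : Matrix m m ℂ | A.PosSemidef} :=
  fun _ hA _ hB _ _ ha hb _ => (hA.smul ha).add (hB.smul hb)

lemma convex_setOf_posSemidef_prod {m k : Type*} :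
    Convex ℝ ({A : Matrix m m ℂ | A.PosSemidef} ×ˢ {Y : Matrix k k ℂ | Y.PosSemidef}) :=
  convex_setOf_posSemidef.prod convex_setOf_posSemidef

end Concavity

section FunctionalCalculus

variable {m : Type*} [Fintype m] [DecidableEq m] {A : Matrix m m ℂ}

lemma mfun_eq_cfc (f : ℝ → ℝ) (A : Matrix m m ℂ) : mfun f A = cfc f A := by
  by_cases hA : A.IsHermitian
  · rw [hA.cfc_eq f, Matrix.IsHermitian.cfc, Unitary.conjStarAlgAut_apply, mfun, dif_pos hA]
    rfl
  · rw [mfun, dif_neg hA, cfc_apply_of_not_predicate (p := IsSelfAdjoint) A hA]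

lemma mfun_id (hA : A.IsHermitian) : mfun (fun x => x) A = A := by
  rw [mfun_eq_cfc, cfc_id' ℝ A hA.isSelfAdjoint]

lemma mfun_one (hA : A.IsHermitian) : mfun (fun _ => 1) A = 1 := by
  rw [mfun_eq_cfc, cfc_const_one ℝ A hA.isSelfAdjoint]

lemma mpow_one (hA : A.IsHermitian) : mpow A 1 = A := by
  simpa only [mpow, Real.rpow_one] using mfun_id hA

lemma mpow_zero (hA : A.IsHermitian) : mpow A 0 = 1 := by
  simpa only [mpow, Real.rpow_zero] using mfun_one hA

lemma posSemidef_mpow (hA : A.PosSemidef) (p : ℝ) : (mpow A p).PosSemidef := by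
  rw [← nonneg_iff_posSemidef, mpow, mfun_eq_cfc]
  exact cfc_nonneg fun x hx =>
    Real.rpow_nonneg (spectrum_nonneg_of_nonneg (nonneg_iff_posSemidef.2 hA) hx) p

lemma mul_mpow_mpow_one_div (hA : A.PosSemidef) {p : ℝ} (hp : p ≠ 0) :
    A * mpow (mpow A (1 / p)) (1 - p) = mpow A (1 / p) := by
  have hcont (f : ℝ → ℝ) : ContinuousOn f (spectrum ℝ A) := A.finite_real_spectrum.continuousOn f
  have hrpow : (spectrum ℝ A).EqOn (fun x => x * (x ^ (1 / p)) ^ (1 - p)) (· ^ (1 / p)) := by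
    intro x hx
    rcases (spectrum_nonneg_of_nonneg (nonneg_iff_posSemidef.2 hA) hx).eq_or_lt with rfl | hpos
    · simp [Real.zero_rpow (inv_ne_zero hp)]
    · calc x * (x ^ (1 / p)) ^ (1 - p) = x ^ (1 + 1 / p * (1 - p)) := by
            rw [Real.rpow_add hpos, Real.rpow_one, Real.rpow_mul hpos.le]
        _ = x ^ (1 / p) := by
            congr 1
            field_simp
            ring
  simp only [mpow, mfun_eq_cfc]
  rw [← cfc_comp' (· ^ (1 - p)) (· ^ (1 / p)) A
    ((A.finite_real_spectrum.image _).continuousOn _) (hcont _) hA.1.isSelfAdjoint]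
  calc A * cfc (fun x => (x ^ (1 / p)) ^ (1 - p)) A
      = cfc (fun x => x) A * cfc (fun x => (x ^ (1 / p)) ^ (1 - p)) A := by
        rw [cfc_id' ℝ A hA.1.isSelfAdjoint]
    _ = cfc (· ^ (1 / p)) A := by rw [← cfc_mul _ _ A (hcont _) (hcont _), cfc_congr hrpow]

end FunctionalCalculus

section ConjTrace

variable {m k : Type*} [Fintype m] [Fintype k]

/-- The real-linear functional `A ↦ Re tr (Wᴴ A W)`. -/
def conjTrace (W : Matrix m k ℂ) : Matrix m m ℂ →ₗ[ℝ] ℝ where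
  toFun A := (Wᴴ * A * W).trace.re
  map_add' A B := by simp [Matrix.mul_add, Matrix.add_mul]
  map_smul' r A := by simp

lemma conjTrace_apply (W : Matrix m k ℂ) (A : Matrix m m ℂ) :
    conjTrace W A = (Wᴴ * A * W).trace.re := rfl

lemma conjTrace_one [DecidableEq m] (A : Matrix m m ℂ) :
    conjTrace (1 : Matrix m m ℂ) A = A.trace.re := by
  simp [conjTrace_apply]

lemma conjTrace_nonneg (W : Matrix m k ℂ) {A : Matrix m m ℂ} (hA : A.PosSemidef) :
    0 ≤ conjTrace W A :=
  (Complex.le_def.1 (hA.conjTranspose_mul_mul_same W).trace_nonneg).1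

end ConjTrace

section Eigenbases

variable {m k : Type*} [Fintype m] [DecidableEq m] [Fintype k] [DecidableEq k]
  {A : Matrix m m ℂ} {Y : Matrix k k ℂ} (hA : A.IsHermitian) (hY : Y.IsHermitian)

/-- The matrix of `K` with respect to the eigenbasis of `Y` on the source and the eigenbasis of `A`
on the target. In these coordinates `K ↦ A * K * Y` multiplies the `(i, j)` entry by the product
of the `i`-th eigenvalue of `A` and the `j`-th eigenvalue of `Y`. -/
noncomputable def eigenCoord (K : Matrix m k ℂ) : Matrix m k ℂ :=
  star (hA.eigenvectorUnitary : Matrix m m ℂ) * K * (hY.eigenvectorUnitary : Matrix k k ℂ)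

lemma eigenCoord_sub (K W : Matrix m k ℂ) :
    eigenCoord hA hY (K - W) = eigenCoord hA hY K - eigenCoord hA hY W := by
  simp only [eigenCoord, Matrix.mul_sub, Matrix.sub_mul]

lemma eigenCoord_surjective : Function.Surjective (eigenCoord hA hY) := by
  intro N
  set U : Matrix m m ℂ := (hA.eigenvectorUnitary : Matrix m m ℂ)
  set V : Matrix k k ℂ := (hY.eigenvectorUnitary : Matrix k k ℂ)
  have hU : star U * U = 1 := Unitary.coe_star_mul_self _
  have hV : star V * V = 1 := Unitary.coe_star_mul_self _
  refine ⟨U * N * star V, ?_⟩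
  calc star U * (U * N * star V) * V = (star U * U) * N * (star V * V) := by
        simp only [Matrix.mul_assoc]
    _ = N := by rw [hU, hV, Matrix.one_mul, Matrix.mul_one]

lemma re_trace_conjTranspose_mul_diagonal_mul_mul_diagonal (M : Matrix m k ℂ) (d : m → ℝ)
    (e : k → ℝ) :
    (Mᴴ * diagonal (fun i => (d i : ℂ)) * M * diagonal (fun j => (e j : ℂ))).trace.re =
      ∑ i, ∑ j, d i * e j * ‖M i j‖ ^ 2 := by
  have hentry (i : m) (j : k) :
      (star (M i j) * d i * M i j * e j).re = d i * e j * ‖M i j‖ ^ 2 := by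
    rw [← Complex.normSq_eq_norm_sq, Complex.normSq_apply]
    simp only [RCLike.star_def, Complex.mul_re, Complex.mul_im, Complex.conj_re, Complex.conj_im,
      Complex.ofReal_re, Complex.ofReal_im, mul_zero, sub_zero, neg_mul, zero_add, sub_neg_eq_add]
    ring
  rw [Finset.sum_comm]
  simp only [Matrix.trace, Matrix.diag, Matrix.mul_diagonal, Matrix.mul_apply (N := M),
    Matrix.conjTranspose_apply, Finset.sum_mul, Complex.re_sum, hentry]

lemma re_trace_conjTranspose_mul_mfun_mul_mul_mfun (K : Matrix m k ℂ) (f g : ℝ → ℝ) :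
    (Kᴴ * mfun f A * K * mfun g Y).trace.re =
      ∑ i, ∑ j, f (hA.eigenvalues i) * g (hY.eigenvalues j) * ‖eigenCoord hA hY K i j‖ ^ 2 := by
  rw [← re_trace_conjTranspose_mul_diagonal_mul_mul_diagonal, mfun, mfun, dif_pos hA, dif_pos hY,
    ← Matrix.mul_assoc, Matrix.trace_mul_comm]
  simp only [eigenCoord, star_eq_conjTranspose, conjTranspose_mul, conjTranspose_conjTranspose,
    Matrix.mul_assoc]

lemma conjTrace_eq_sum (W : Matrix m k ℂ) :
    conjTrace W A = ∑ i, ∑ j, hA.eigenvalues i * ‖eigenCoord hA hY W i j‖ ^ 2 := by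
  simpa [conjTrace_apply, mfun_id hA, mfun_one hY] using
    re_trace_conjTranspose_mul_mfun_mul_mul_mfun hA hY W (fun x => x) (fun _ => 1)

lemma conjTrace_conjTranspose_eq_sum (W : Matrix m k ℂ) :
    conjTrace Wᴴ Y = ∑ i, ∑ j, hY.eigenvalues j * ‖eigenCoord hA hY W i j‖ ^ 2 := by
  have h := re_trace_conjTranspose_mul_mfun_mul_mul_mfun hA hY W (fun _ => 1) (fun x => x)
  simp only [mfun_one hA, mfun_id hY, Matrix.mul_one, one_mul] at h
  rw [← h, conjTrace_apply, conjTranspose_conjTranspose, Matrix.trace_mul_comm, Matrix.mul_assoc]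

end Eigenbases

section ParallelSum

-- Completing the square in `w`, valid also at `a + b = 0`, where all the terms vanish.
lemma mul_norm_sq_add_mul_norm_sub_sq {E : Type*} [NormedAddCommGroup E] [InnerProductSpace ℝ E]
    {a b : ℝ} (ha : 0 ≤ a) (hb : 0 ≤ b) (z w : E) :
    a * ‖w‖ ^ 2 + b * ‖z - w‖ ^ 2 =
      a * b / (a + b) * ‖z‖ ^ 2 + (a + b) * ‖w - (b / (a + b)) • z‖ ^ 2 := by
  rcases (add_nonneg ha hb).eq_or_lt with h | h
  · obtain ⟨rfl, rfl⟩ := (add_eq_zero_iff_of_nonneg ha hb).1 h.symm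
    simp
  · rw [norm_sub_sq_real, norm_sub_sq_real, inner_smul_right, norm_smul, mul_pow, Real.norm_eq_abs,
      sq_abs, real_inner_comm]
    field_simp
    ring

variable {m k : Type*} [Fintype m] [Fintype k]

/-- The value at `K` of the quadratic form of the parallel sum of the operators `K ↦ Z.1 * K` and
`K ↦ K * Z.2`, encoded by the Anderson–Duffin variational formula. For positive semidefinite
`Z.1` and `Z.2` the infimum is over nonnegative values; otherwise it may be the junk value `0`. -/
noncomputable def parallelSumForm (K : Matrix m k ℂ) (Z : Matrix m m ℂ × Matrix k k ℂ) : ℝ :=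
  ⨅ W : Matrix m k ℂ, (conjTrace W Z.1 + conjTrace (K - W)ᴴ Z.2)

lemma bddBelow_range_parallelSumForm (K : Matrix m k ℂ) {A : Matrix m m ℂ} {Y : Matrix k k ℂ}
    (hA : A.PosSemidef) (hY : Y.PosSemidef) :
    BddBelow (range fun W : Matrix m k ℂ => conjTrace W A + conjTrace (K - W)ᴴ Y) :=
  ⟨0, forall_mem_range.2 fun W => add_nonneg (conjTrace_nonneg W hA) (conjTrace_nonneg _ hY)⟩

lemma concaveOn_parallelSumForm (K : Matrix m k ℂ) :
    ConcaveOn ℝ ({A : Matrix m m ℂ | A.PosSemidef} ×ˢ {Y : Matrix k k ℂ | Y.PosSemidef})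
      (parallelSumForm K) :=
  concaveOn_ciInf convex_setOf_posSemidef_prod
    (fun W => ((conjTrace W).coprod (conjTrace (K - W)ᴴ)).concaveOn convex_setOf_posSemidef_prod)
    fun _ hZ => bddBelow_range_parallelSumForm K hZ.1 hZ.2

lemma concaveOn_parallelSumForm_smul_right (K : Matrix m k ℂ) {t : ℝ} (ht : 0 ≤ t) :
    ConcaveOn ℝ ({A : Matrix m m ℂ | A.PosSemidef} ×ˢ {Y : Matrix k k ℂ | Y.PosSemidef})
      fun Z : Matrix m m ℂ × Matrix k k ℂ => parallelSumForm K (Z.1, t • Z.2) := by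
  have hcomp := (concaveOn_parallelSumForm K).comp_linearMap
    (LinearMap.id.prodMap (t • LinearMap.id) : _ →ₗ[ℝ] Matrix m m ℂ × Matrix k k ℂ)
  exact hcomp.subset (fun Z hZ => ⟨hZ.1, hZ.2.smul ht⟩) convex_setOf_posSemidef_prod

lemma parallelSumForm_smul_right_eq_sum [DecidableEq m] [DecidableEq k] (K : Matrix m k ℂ)
    {A : Matrix m m ℂ} {Y : Matrix k k ℂ} (hA : A.PosSemidef) (hY : Y.PosSemidef) {t : ℝ}
    (ht : 0 ≤ t) :
    parallelSumForm K (A, t • Y) =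
      ∑ i, ∑ j, hA.1.eigenvalues i * (t * hY.1.eigenvalues j) /
        (hA.1.eigenvalues i + t * hY.1.eigenvalues j) * ‖eigenCoord hA.1 hY.1 K i j‖ ^ 2 := by
  set a := hA.1.eigenvalues
  set y := hY.1.eigenvalues
  set c := eigenCoord hA.1 hY.1
  have ha : ∀ i, 0 ≤ a i := hA.eigenvalues_nonneg
  have hy : ∀ j, 0 ≤ t * y j := fun j => mul_nonneg ht (hY.eigenvalues_nonneg j)
  have hsquare (W : Matrix m k ℂ) : conjTrace W A + conjTrace (K - W)ᴴ (t • Y) =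
      ∑ i, ∑ j, (a i * (t * y j) / (a i + t * y j) * ‖c K i j‖ ^ 2 +
        (a i + t * y j) * ‖c W i j - (t * y j / (a i + t * y j)) • c K i j‖ ^ 2) := by
    rw [map_smul, conjTrace_eq_sum hA.1 hY.1, conjTrace_conjTranspose_eq_sum hA.1 hY.1,
      eigenCoord_sub]
    simp only [smul_eq_mul, Finset.mul_sum, ← Finset.sum_add_distrib, Matrix.sub_apply]
    refine Finset.sum_congr rfl fun i _ => Finset.sum_congr rfl fun j _ => ?_
    rw [← mul_norm_sq_add_mul_norm_sub_sq (ha i) (hy j), mul_assoc]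
  refine le_antisymm ?_ (le_ciInf fun W => ?_)
  · obtain ⟨W, hW⟩ := eigenCoord_surjective hA.1 hY.1
      (Matrix.of fun i j => (t * y j / (a i + t * y j)) • c K i j)
    refine (ciInf_le (bddBelow_range_parallelSumForm K hA (hY.smul ht)) W).trans_eq ?_
    rw [hsquare]
    simp [c, hW]
  · rw [hsquare]
    gcongr with i _ j _
    exact le_add_of_nonneg_right (mul_nonneg (add_nonneg (ha i) (hy j)) (sq_nonneg _))

end ParallelSum

section Lieb

lemma exists_measure_rpow_mul_rpow_eq_integral {p : ℝ} (hp : p ∈ Ioo (0 : ℝ) 1) :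
    ∃ μ : Measure ℝ, ∀ a y : ℝ, 0 ≤ a → 0 ≤ y →
      IntegrableOn (fun t => t ^ (p - 2) * (a * (t * y) / (a + t * y))) (Ioi 0) μ ∧
      a ^ p * y ^ (1 - p) = ∫ t in Ioi 0, t ^ (p - 2) * (a * (t * y) / (a + t * y)) ∂μ := by
  obtain ⟨μ, hμ⟩ := Real.exists_measure_rpow_eq_integral_rpowIntegrand₀₁ hp
  refine ⟨μ, fun a y ha hy => ?_⟩
  rcases hy.eq_or_lt with rfl | hy
  · simp [Real.zero_rpow (sub_pos.2 hp.2).ne']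
  have hay : 0 ≤ a / y := by positivity
  have hintegrand : EqOn (fun t => y * Real.rpowIntegrand₀₁ p t (a / y))
      (fun t => t ^ (p - 2) * (a * (t * y) / (a + t * y))) (Ioi 0) := by
    intro t (ht : 0 < t)
    have htpow : t ^ (p - 1) = t ^ (p - 2) * t := by
      rw [← Real.rpow_add_one ht.ne']
      ring_nf
    have hden : t + a / y = (a + t * y) / y := by field_simp; ring
    simp only [Real.rpowIntegrand₀₁_eq_pow_div hp ht.le hay, htpow, hden]
    field_simp
  have hrpow : a ^ p * y ^ (1 - p) = y * (a / y) ^ p := by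
    rw [Real.div_rpow ha hy.le, Real.rpow_sub hy, Real.rpow_one]
    ring
  obtain ⟨hintegrable, heq⟩ := hμ (a / y) hay
  refine ⟨IntegrableOn.congr_fun (hintegrable.const_mul y) hintegrand measurableSet_Ioi, ?_⟩
  rw [hrpow, heq, ← integral_const_mul, setIntegral_congr_fun measurableSet_Ioi hintegrand]

variable {m k : Type*} [Fintype m] [DecidableEq m] [Fintype k] [DecidableEq k]

lemma exists_measure_re_trace_mpow_mul_mpow_eq_integral {p : ℝ} (hp : p ∈ Ioo (0 : ℝ) 1)
    (K : Matrix m k ℂ) :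
    ∃ μ : Measure ℝ, ∀ (A : Matrix m m ℂ) (Y : Matrix k k ℂ), A.PosSemidef → Y.PosSemidef →
      IntegrableOn (fun t => t ^ (p - 2) * parallelSumForm K (A, t • Y)) (Ioi 0) μ ∧
      (Kᴴ * mpow A p * K * mpow Y (1 - p)).trace.re =
        ∫ t in Ioi 0, t ^ (p - 2) * parallelSumForm K (A, t • Y) ∂μ := by
  obtain ⟨μ, hμ⟩ := exists_measure_rpow_mul_rpow_eq_integral hp
  refine ⟨μ, fun A Y hA hY => ?_⟩
  set a := hA.1.eigenvalues
  set y := hY.1.eigenvalues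
  set c := eigenCoord hA.1 hY.1 K
  have hscalar (i : m) (j : k) := hμ (a i) (y j) (hA.eigenvalues_nonneg i) (hY.eigenvalues_nonneg j)
  have hintegrable (i : m) (j : k) := (hscalar i j).1.mul_const (‖c i j‖ ^ 2)
  have hsum : EqOn (fun t => ∑ i, ∑ j,
        t ^ (p - 2) * (a i * (t * y j) / (a i + t * y j)) * ‖c i j‖ ^ 2)
      (fun t => t ^ (p - 2) * parallelSumForm K (A, t • Y)) (Ioi 0) := by
    intro t (ht : 0 < t)
    simp only [parallelSumForm_smul_right_eq_sum K hA hY ht.le, Finset.mul_sum, mul_assoc, a, y, c]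
  constructor
  · exact IntegrableOn.congr_fun
      (integrable_finsetSum _ fun i _ => integrable_finsetSum _ fun j _ => hintegrable i j) hsum
      measurableSet_Ioi
  · rw [← setIntegral_congr_fun measurableSet_Ioi hsum,
      integral_finsetSum _ fun i _ => integrable_finsetSum _ fun j _ => hintegrable i j, mpow, mpow,
      re_trace_conjTranspose_mul_mfun_mul_mul_mfun hA.1 hY.1]
    refine Finset.sum_congr rfl fun i _ => ?_
    rw [integral_finsetSum _ fun j _ => hintegrable i j]
    refine Finset.sum_congr rfl fun j _ => ?_
    rw [integral_mul_const, (hscalar i j).2]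

theorem lieb_concavity {p : ℝ} (hp : p ∈ Icc (0 : ℝ) 1) (K : Matrix m k ℂ) :
    ConcaveOn ℝ ({A : Matrix m m ℂ | A.PosSemidef} ×ˢ {Y : Matrix k k ℂ | Y.PosSemidef})
      fun Z : Matrix m m ℂ × Matrix k k ℂ => (Kᴴ * mpow Z.1 p * K * mpow Z.2 (1 - p)).trace.re := by
  rcases hp.1.eq_or_lt with rfl | hp0
  · refine (((conjTrace Kᴴ).comp (LinearMap.snd ℝ (Matrix m m ℂ) (Matrix k k ℂ))).concaveOn
      convex_setOf_posSemidef_prod).congr fun Z hZ => ?_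
    simp [conjTrace_apply, mpow_zero hZ.1.1, mpow_one hZ.2.1, Matrix.trace_mul_comm Kᴴ (K * Z.2),
      Matrix.mul_assoc Kᴴ]
  rcases hp.2.eq_or_lt with rfl | hp1
  · refine (((conjTrace K).comp (LinearMap.fst ℝ (Matrix m m ℂ) (Matrix k k ℂ))).concaveOn
      convex_setOf_posSemidef_prod).congr fun Z hZ => ?_
    simp [conjTrace_apply, mpow_one hZ.1.1, mpow_zero hZ.2.1]
  obtain ⟨μ, hμ⟩ := exists_measure_re_trace_mpow_mul_mpow_eq_integral ⟨hp0, hp1⟩ K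
  have hconcave : ∀ᵐ t ∂μ.restrict (Ioi 0), ConcaveOn ℝ
      ({A : Matrix m m ℂ | A.PosSemidef} ×ˢ {Y : Matrix k k ℂ | Y.PosSemidef})
      fun Z : Matrix m m ℂ × Matrix k k ℂ => t ^ (p - 2) * parallelSumForm K (Z.1, t • Z.2) := by
    filter_upwards [ae_restrict_mem measurableSet_Ioi] with t (ht : 0 < t)
    exact (concaveOn_parallelSumForm_smul_right K ht.le).smul (Real.rpow_nonneg ht.le _)
  have hintegral := integral_concaveOn_of_integrand_ae convex_setOf_posSemidef_prod hconcave
    fun Z hZ => (hμ Z.1 Z.2 hZ.1 hZ.2).1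
  exact hintegral.congr fun Z hZ => (hμ Z.1 Z.2 hZ.1 hZ.2).2.symm

end Lieb

section Epstein

variable {m k : Type*} [Fintype m] [DecidableEq m] [Fintype k] [DecidableEq k] {p : ℝ}

lemma re_trace_mul_mpow_le (hp0 : 0 < p) (hp1 : p ≤ 1) {X Y : Matrix m m ℂ} (hX : X.PosSemidef)
    (hY : Y.PosSemidef) :
    (X * mpow Y (1 - p)).trace.re ≤ p * (mpow X (1 / p)).trace.re + (1 - p) * Y.trace.re := by
  have hexpand := re_trace_conjTranspose_mul_mfun_mul_mul_mfun hX.1 hY.1 1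
  have hXY := hexpand (fun x => x) (fun y => y ^ (1 - p))
  have hXtrace := hexpand (fun x => x ^ (1 / p)) (fun _ => 1)
  have hYtrace := hexpand (fun _ => 1) (fun y => y)
  simp only [mfun_id hX.1, mfun_id hY.1, mfun_one hX.1, mfun_one hY.1, conjTranspose_one,
    one_mul, mul_one] at hXY hXtrace hYtrace
  rw [mpow, mpow, hXY, hXtrace, hYtrace]
  simp only [Finset.mul_sum, ← Finset.sum_add_distrib, ← mul_assoc, ← add_mul]
  gcongr with i _ j _
  have hx := hX.eigenvalues_nonneg i
  have young := Real.geom_mean_le_arith_mean2_weighted hp0.le (sub_nonneg.2 hp1)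
    (Real.rpow_nonneg hx (1 / p)) (hY.eigenvalues_nonneg j) (add_sub_cancel p 1)
  rwa [← Real.rpow_mul hx, one_div_mul_cancel hp0.ne', Real.rpow_one] at young

lemma isGreatest_re_trace_mul_mpow_sub (hp0 : 0 < p) (hp1 : p ≤ 1) {X : Matrix m m ℂ}
    (hX : X.PosSemidef) :
    IsGreatest ((fun Y => (X * mpow Y (1 - p)).trace.re - (1 - p) * Y.trace.re) ''
      {Y | Y.PosSemidef}) (p * (mpow X (1 / p)).trace.re) := by
  refine ⟨⟨mpow X (1 / p), posSemidef_mpow hX _, ?_⟩, forall_mem_image.2 fun Y hY => ?_⟩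
  · simp only [mul_mpow_mpow_one_div hX hp0.ne']
    ring
  · exact sub_le_iff_le_add.2 (re_trace_mul_mpow_le hp0 hp1 hX hY)

theorem epstein_concavity_general (B : Matrix m k ℂ) (hp0 : 0 < p) (hp1 : p ≤ 1) :
    ConcaveOn ℝ {A : Matrix m m ℂ | A.PosSemidef}
      fun A => (mpow (Bᴴ * mpow A p * B) (1 / p)).trace.re := by
  have htrace : ConvexOn ℝ ({A : Matrix m m ℂ | A.PosSemidef} ×ˢ {Y : Matrix k k ℂ | Y.PosSemidef})
      fun Z : Matrix m m ℂ × Matrix k k ℂ => (1 - p) * Z.2.trace.re := by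
    let L : Matrix m m ℂ × Matrix k k ℂ →ₗ[ℝ] ℝ :=
      ((1 - p) • conjTrace (1 : Matrix k k ℂ)).comp (LinearMap.snd ℝ _ _)
    simpa [L, conjTrace_one, Function.comp_def] using L.convexOn convex_setOf_posSemidef_prod
  have hmax (A : Matrix m m ℂ) (hA : A.PosSemidef) :=
    isGreatest_re_trace_mul_mpow_sub hp0 hp1 ((posSemidef_mpow hA p).conjTranspose_mul_mul_same B)
  have hjoint := (lieb_concavity ⟨hp0.le, hp1⟩ B).sub htrace
  have hscaled : ConcaveOn ℝ {A : Matrix m m ℂ | A.PosSemidef}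
      fun A => p * (mpow (Bᴴ * mpow A p * B) (1 / p)).trace.re :=
    concaveOn_of_forall_isGreatest convex_setOf_posSemidef hjoint hmax
  simpa [hp0.ne'] using hscaled.smul (inv_nonneg.2 hp0.le)

end Epstein

theorem epstein_concavity {n : ℕ} (B : Matrix (Fin n) (Fin n) ℂ) (p : ℝ)
    (hp0 : 0 < p) (hp1 : p ≤ 1) (A₀ A₁ : Matrix (Fin n) (Fin n) ℂ)
    (hA₀ : A₀.PosDef) (hA₁ : A₁.PosDef) (t : ℝ) (ht0 : 0 ≤ t) (ht1 : t ≤ 1) :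
    (1 - t) * (mpow (Bᴴ * mpow A₀ p * B) (1/p)).trace.re +
        t * (mpow (Bᴴ * mpow A₁ p * B) (1/p)).trace.re ≤
      (mpow (Bᴴ * mpow (((1 - t : ℝ) : ℂ) • A₀ + ((t : ℝ) : ℂ) • A₁) p * B) (1/p)).trace.re := by
  simpa only [Complex.coe_smul, smul_eq_mul] using (epstein_concavity_general B hp0 hp1).2
    hA₀.posSemidef hA₁.posSemidef (sub_nonneg.2 ht1) ht0 (sub_add_cancel 1 t)
end

section
/- (Lieb–Thirring inequality) For positive semidefinite n×n matrices A, B and real α ≥ 1, tr((B^{1/2} A B^{1/2})^α) ≤ tr(B^{α/2} A^α B^{α/2}). -/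
open Matrix ComplexOrder

/-!
By cyclicity `tr (Sᴴ * C * S * D)` is the trace of a product of `C * S` and `D * Sᴴ`, so for
contractions `C` and `D` the Cauchy–Schwarz inequality bounds it by the squared Hilbert–Schmidt
norm of `S`. For `X ≥ 0` put `F z = tr (B ^ (z / 2) * A ^ z * B ^ (z / 2) * X ^ (α - z))`. Purely
imaginary powers are contractions, so the bound gives `|F| ≤ tr (X ^ α)` on `re z = 0` and
`|F| ≤ tr (B ^ (α / 2) * A ^ α * B ^ (α / 2))` on `re z = α`, and the three lines theorem
interpolates to `z = 1`. For `X = B ^ (1 / 2) * A * B ^ (1 / 2)` one has `F 1 = tr (X ^ α)`, and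
the resulting inequality `t ≤ t ^ (1 - 1 / α) * r ^ (1 / α)` means `t ≤ r`.
-/

lemma le_of_le_rpow_one_sub_mul_rpow {a b s : ℝ} (ha : 0 ≤ a) (hb : 0 ≤ b) (hs : 0 < s)
    (h : a ≤ a ^ (1 - s) * b ^ s) : a ≤ b := by
  rcases ha.eq_or_lt with rfl | ha'
  · exact hb
  · rw [Real.rpow_sub ha', Real.rpow_one, div_mul_eq_mul_div,
      le_div_iff₀ (Real.rpow_pos_of_pos ha' s)] at h
    exact (Real.rpow_le_rpow_iff ha hb hs).1 (le_of_mul_le_mul_left h ha')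

lemma norm_mul_mul_le_one {R : Type*} [NonUnitalSeminormedRing R] {x y z : R}
    (hx : ‖x‖ ≤ 1) (hy : ‖y‖ ≤ 1) (hz : ‖z‖ ≤ 1) : ‖x * y * z‖ ≤ 1 := by
  simpa only [one_mul] using norm_mul_le_of_le (norm_mul_le_of_le hx hy) hz

section HilbertSchmidt

variable {𝕜 l m n : Type*} [RCLike 𝕜] [Fintype l] [Fintype m] [Fintype n]

/-- The squared Hilbert–Schmidt (Frobenius) norm. It is a plain function, not the norm of
`Matrix.Norms.Frobenius`, since `‖·‖` is reserved here for the operator norm. -/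
def hsNormSq (S : Matrix m n 𝕜) : ℝ :=
  ∑ i, ∑ j, ‖S i j‖ ^ 2

lemma hsNormSq_nonneg (S : Matrix m n 𝕜) : 0 ≤ hsNormSq S := by
  unfold hsNormSq
  positivity

lemma hsNormSq_conjTranspose (S : Matrix m n 𝕜) : hsNormSq Sᴴ = hsNormSq S := by
  simp only [hsNormSq, conjTranspose_apply, norm_star]
  exact Finset.sum_comm

lemma trace_conjTranspose_mul_self_eq_hsNormSq (S : Matrix m n 𝕜) :
    (Sᴴ * S).trace = (hsNormSq S : 𝕜) := by
  simp only [hsNormSq, trace, diag_apply, mul_apply, conjTranspose_apply, RCLike.star_def,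
    RCLike.conj_mul, RCLike.ofReal_sum, RCLike.ofReal_pow]
  exact Finset.sum_comm

lemma norm_trace_mul_sq_le (S : Matrix m n 𝕜) (T : Matrix n m 𝕜) :
    ‖(S * T).trace‖ ^ 2 ≤ hsNormSq S * hsNormSq T := by
  have triangle : ‖(S * T).trace‖ ≤ ∑ p : m × n, ‖S p.1 p.2‖ * ‖T p.2 p.1‖ := by
    simp only [trace, diag_apply, mul_apply, ← norm_mul, ← Fintype.sum_prod_type']
    exact norm_sum_le _ _
  calc ‖(S * T).trace‖ ^ 2
      ≤ (∑ p : m × n, ‖S p.1 p.2‖ * ‖T p.2 p.1‖) ^ 2 := by gcongr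
    _ ≤ (∑ p : m × n, ‖S p.1 p.2‖ ^ 2) * ∑ p : m × n, ‖T p.2 p.1‖ ^ 2 :=
        Finset.sum_mul_sq_le_sq_mul_sq _ _ _
    _ = hsNormSq S * hsNormSq T := by
        rw [hsNormSq, hsNormSq, Fintype.sum_prod_type, Fintype.sum_prod_type_right]

open scoped Matrix.Norms.L2Operator

variable [DecidableEq m]

lemma hsNormSq_mul_le (C : Matrix l m 𝕜) (S : Matrix m n 𝕜) :
    hsNormSq (C * S) ≤ ‖C‖ ^ 2 * hsNormSq S := by
  have column_le (j : n) : ∑ i, ‖(C * S) i j‖ ^ 2 ≤ ‖C‖ ^ 2 * ∑ i, ‖S i j‖ ^ 2 := by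
    have h := pow_le_pow_left₀ (norm_nonneg _) (l2_opNorm_mulVec C (WithLp.toLp 2 (S.col j))) 2
    rwa [mul_pow, EuclideanSpace.norm_sq_eq, EuclideanSpace.norm_sq_eq] at h
  rw [hsNormSq, hsNormSq, Finset.sum_comm, Finset.sum_comm (f := fun i j => ‖S i j‖ ^ 2),
    Finset.mul_sum]
  exact Finset.sum_le_sum fun j _ => column_le j

lemma norm_trace_conjTranspose_mul_mul_mul_le [DecidableEq n] (S : Matrix m n 𝕜) (C : Matrix m m 𝕜)
    (D : Matrix n n 𝕜) : ‖(Sᴴ * C * S * D).trace‖ ≤ ‖C‖ * ‖D‖ * hsNormSq S := by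
  refine le_of_sq_le_sq ?_ (by have := hsNormSq_nonneg S; positivity)
  have hD : hsNormSq (D * Sᴴ) ≤ ‖D‖ ^ 2 * hsNormSq S :=
    (hsNormSq_mul_le D Sᴴ).trans_eq (by rw [hsNormSq_conjTranspose])
  calc ‖(Sᴴ * C * S * D).trace‖ ^ 2
      = ‖((C * S) * (D * Sᴴ)).trace‖ ^ 2 := by
        rw [Matrix.mul_assoc Sᴴ, Matrix.mul_assoc, trace_mul_comm, Matrix.mul_assoc (C * S)]
    _ ≤ hsNormSq (C * S) * hsNormSq (D * Sᴴ) := norm_trace_mul_sq_le _ _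
    _ ≤ (‖C‖ ^ 2 * hsNormSq S) * (‖D‖ ^ 2 * hsNormSq S) :=
        mul_le_mul (hsNormSq_mul_le C S) hD (hsNormSq_nonneg _)
          (mul_nonneg (sq_nonneg _) (hsNormSq_nonneg S))
    _ = (‖C‖ * ‖D‖ * hsNormSq S) ^ 2 := by ring

lemma norm_trace_conjTranspose_mul_mul_mul_le_of_norm_le_one [DecidableEq n] (S : Matrix m n 𝕜)
    {C : Matrix m m 𝕜} {D : Matrix n n 𝕜} (hC : ‖C‖ ≤ 1) (hD : ‖D‖ ≤ 1) :
    ‖(Sᴴ * C * S * D).trace‖ ≤ hsNormSq S :=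
  (norm_trace_conjTranspose_mul_mul_mul_le S C D).trans <|
    mul_le_of_le_one_left (hsNormSq_nonneg S) (mul_le_one₀ hC (norm_nonneg D) hD)

end HilbertSchmidt

section SpectralMap

variable {𝕜 m : Type*} [RCLike 𝕜] [Fintype m] [DecidableEq m] {M : Matrix m m 𝕜}

/-- The functional calculus of a Hermitian matrix for scalar-valued functions, so that complex
powers are available; Mathlib's `cfc` over `ℝ` only takes real-valued functions. -/
noncomputable def spectralMap (hM : M.IsHermitian) (f : ℝ → 𝕜) : Matrix m m 𝕜 :=
  Unitary.conjStarAlgAut 𝕜 _ hM.eigenvectorUnitary (diagonal fun i => f (hM.eigenvalues i))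

lemma spectralMap_congr (hM : M.IsHermitian) {f g : ℝ → 𝕜}
    (h : ∀ i, f (hM.eigenvalues i) = g (hM.eigenvalues i)) :
    spectralMap hM f = spectralMap hM g := by
  simp only [spectralMap, h]

lemma spectralMap_mul (hM : M.IsHermitian) (f g : ℝ → 𝕜) :
    spectralMap hM (fun x => f x * g x) = spectralMap hM f * spectralMap hM g := by
  rw [spectralMap, spectralMap, spectralMap, ← map_mul, diagonal_mul_diagonal]

lemma conjTranspose_spectralMap (hM : M.IsHermitian) (f : ℝ → 𝕜) :
    (spectralMap hM f)ᴴ = spectralMap hM (fun x => star (f x)) := by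
  rw [spectralMap, spectralMap, ← star_eq_conjTranspose, ← map_star, star_eq_conjTranspose,
    diagonal_conjTranspose]
  rfl

lemma spectralMap_ofReal (hM : M.IsHermitian) : spectralMap hM RCLike.ofReal = M :=
  hM.spectral_theorem.symm

lemma mfun_eq_spectralMap {M : Matrix m m ℂ} (hM : M.IsHermitian) (f : ℝ → ℝ) :
    mfun f M = spectralMap hM (fun x => (f x : ℂ)) := by
  rw [mfun, dif_pos hM, spectralMap, Unitary.conjStarAlgAut_apply]

open scoped Matrix.Norms.L2Operator

lemma norm_spectralMap (hM : M.IsHermitian) (f : ℝ → 𝕜) :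
    ‖spectralMap hM f‖ = ‖fun i => f (hM.eigenvalues i)‖ := by
  rw [spectralMap, Unitary.conjStarAlgAut_apply, ← Unitary.coe_star,
    CStarRing.norm_mul_coe_unitary, CStarRing.norm_coe_unitary_mul, l2_opNorm_diagonal]

lemma differentiable_spectralMap {E : Type*} [NormedAddCommGroup E] [NormedSpace 𝕜 E]
    (hM : M.IsHermitian) {f : E → ℝ → 𝕜} (hf : ∀ x, Differentiable 𝕜 (f · x)) :
    Differentiable 𝕜 fun z => spectralMap hM (f z) := by
  have hdiag : Differentiable 𝕜 fun z => diagonal fun i => f z (hM.eigenvalues i) :=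
    (diagonalLinearMap m 𝕜 𝕜).toContinuousLinearMap.differentiable.comp
      (differentiable_pi.2 fun i => hf (hM.eigenvalues i))
  simp only [spectralMap, Unitary.conjStarAlgAut_apply]
  exact ((differentiable_const _).mul hdiag).mul (differentiable_const _)

end SpectralMap

section PsdPow

variable {m : Type*} [Fintype m] [DecidableEq m] {M : Matrix m m ℂ}

/-- The complex power `M ^ z` of a positive semidefinite matrix, taken to vanish on the kernel of
`M` for every `z`. In particular `M ^ 0` is the projection onto the range of `M`; this convention
(instead of `0 ^ 0 = 1`) makes `z ↦ M ^ z` entire and multiplicative when `M` is singular. -/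
noncomputable def psdPow (hM : M.PosSemidef) (z : ℂ) : Matrix m m ℂ :=
  spectralMap hM.isHermitian fun x => if x = 0 then 0 else (x : ℂ) ^ z

lemma psdPow_add (hM : M.PosSemidef) (z w : ℂ) :
    psdPow hM (z + w) = psdPow hM z * psdPow hM w := by
  rw [psdPow, psdPow, psdPow, ← spectralMap_mul]
  refine spectralMap_congr _ fun i => ?_
  split_ifs with h
  · rw [mul_zero]
  · exact Complex.cpow_add z w (Complex.ofReal_ne_zero.2 h)

lemma psdPow_ofReal_eq_mpow (hM : M.PosSemidef) {s : ℝ} (hs : s ≠ 0) : psdPow hM s = mpow M s := by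
  rw [psdPow, mpow, mfun_eq_spectralMap hM.isHermitian]
  refine spectralMap_congr _ fun i => ?_
  split_ifs with h
  · rw [h, Real.zero_rpow hs, Complex.ofReal_zero]
  · exact (Complex.ofReal_cpow (hM.eigenvalues_nonneg i) s).symm

lemma psdPow_one (hM : M.PosSemidef) : psdPow hM 1 = M := by
  conv_rhs => rw [← spectralMap_ofReal hM.isHermitian]
  refine spectralMap_congr _ fun i => ?_
  split_ifs with h
  · simp [h]
  · exact Complex.cpow_one _

lemma conjTranspose_psdPow_ofReal (hM : M.PosSemidef) (s : ℝ) :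
    (psdPow hM s)ᴴ = psdPow hM s := by
  rw [psdPow, conjTranspose_spectralMap]
  refine spectralMap_congr _ fun i => ?_
  split_ifs
  · exact star_zero _
  · exact Complex.conj_eq_iff_real.2 ⟨_, (Complex.ofReal_cpow (hM.eigenvalues_nonneg i) s).symm⟩

lemma psdPow_eq_conjTranspose_half_mul_half (hM : M.PosSemidef) (s : ℝ) :
    psdPow hM s = (psdPow hM (s / 2 : ℝ))ᴴ * psdPow hM (s / 2 : ℝ) := by
  rw [conjTranspose_psdPow_ofReal, ← psdPow_add, ← Complex.ofReal_add, add_halves]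

lemma trace_psdPow_eq_hsNormSq (hM : M.PosSemidef) (s : ℝ) :
    (psdPow hM s).trace = hsNormSq (psdPow hM (s / 2 : ℝ)) := by
  rw [psdPow_eq_conjTranspose_half_mul_half, trace_conjTranspose_mul_self_eq_hsNormSq]
  rfl

lemma trace_psdPow_mul_mul_eq_hsNormSq {N : Matrix m m ℂ} (hM : M.PosSemidef)
    (hN : N.PosSemidef) (s : ℝ) :
    (psdPow hN (s / 2 : ℝ) * psdPow hM s * psdPow hN (s / 2 : ℝ)).trace =
      hsNormSq (psdPow hM (s / 2 : ℝ) * psdPow hN (s / 2 : ℝ)) := by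
  rw [psdPow_eq_conjTranspose_half_mul_half hM, ← mul_assoc]
  nth_rw 1 [← conjTranspose_psdPow_ofReal hN]
  rw [← conjTranspose_mul, mul_assoc, trace_conjTranspose_mul_self_eq_hsNormSq]
  rfl

open scoped Matrix.Norms.L2Operator

lemma differentiable_psdPow (hM : M.PosSemidef) : Differentiable ℂ (psdPow hM) := by
  refine differentiable_spectralMap _ fun x => ?_
  split_ifs with h
  · exact differentiable_const 0
  · exact differentiable_id.const_cpow (.inl (Complex.ofReal_ne_zero.2 h))

lemma norm_psdPow_le_one (hM : M.PosSemidef) {z : ℂ} (hz : z.re = 0) : ‖psdPow hM z‖ ≤ 1 := by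
  rw [psdPow, norm_spectralMap, pi_norm_le_iff_of_nonneg zero_le_one]
  intro i
  split_ifs with h
  · simp
  · rw [Complex.norm_cpow_eq_rpow_re_of_pos ((hM.eigenvalues_nonneg i).lt_of_ne' h), hz,
      Real.rpow_zero]

lemma exists_norm_psdPow_le (hM : M.PosSemidef) (a b : ℝ) :
    ∃ C, ∀ z : ℂ, z.re ∈ Set.Icc a b → ‖psdPow hM z‖ ≤ C := by
  have hcont : Continuous fun s : ℝ => psdPow hM s :=
    (differentiable_psdPow hM).continuous.comp Complex.continuous_ofReal
  obtain ⟨C, hC⟩ := isCompact_Icc.exists_bound_of_continuousOn (hcont.continuousOn (s := .Icc a b))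
  refine ⟨C, fun z hz => ?_⟩
  calc ‖psdPow hM z‖ = ‖psdPow hM z.re * psdPow hM (z.im * Complex.I)‖ := by
        rw [← psdPow_add, Complex.re_add_im]
    _ ≤ ‖psdPow hM z.re‖ * ‖psdPow hM (z.im * Complex.I)‖ := norm_mul_le _ _
    _ ≤ ‖psdPow hM z.re‖ :=
        mul_le_of_le_one_right (norm_nonneg _) (norm_psdPow_le_one hM (by simp))
    _ ≤ C := hC _ hz

end PsdPow

section Interpolation

variable {m : Type*} [Fintype m] [DecidableEq m] {A B X : Matrix m m ℂ}

/-- The holomorphic family `z ↦ tr (B ^ (z / 2) * A ^ z * B ^ (z / 2) * X ^ (α - z))` to which the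
three lines theorem is applied on the strip `0 ≤ re z ≤ α`. -/
noncomputable def interpTrace (hA : A.PosSemidef) (hB : B.PosSemidef) (hX : X.PosSemidef)
    (α : ℝ) (z : ℂ) : ℂ :=
  (psdPow hB (z / 2) * psdPow hA z * psdPow hB (z / 2) * psdPow hX (α - z)).trace

variable (hA : A.PosSemidef) (hB : B.PosSemidef) (hX : X.PosSemidef) (α : ℝ)

open scoped Matrix.Norms.L2Operator

lemma differentiable_interpTrace : Differentiable ℂ (interpTrace hA hB hX α) := by
  have hhalf : Differentiable ℂ fun z : ℂ => psdPow hB (z / 2) :=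
    (differentiable_psdPow hB).comp (differentiable_id.div_const 2)
  have hsub : Differentiable ℂ fun z : ℂ => psdPow hX (α - z) :=
    (differentiable_psdPow hX).comp (differentiable_id.const_sub (α : ℂ))
  exact (traceLinearMap m ℂ ℂ).toContinuousLinearMap.differentiable.comp
    (((hhalf.mul (differentiable_psdPow hA)).mul hhalf).mul hsub)

lemma exists_norm_interpTrace_le :
    ∃ C, ∀ z : ℂ, z.re ∈ Set.Icc 0 α → ‖interpTrace hA hB hX α z‖ ≤ C := by
  obtain ⟨a, ha⟩ := exists_norm_psdPow_le hA 0 α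
  obtain ⟨b, hb⟩ := exists_norm_psdPow_le hB 0 (α / 2)
  obtain ⟨x, hx⟩ := exists_norm_psdPow_le hX 0 α
  let tr : Matrix m m ℂ →L[ℂ] ℂ := (traceLinearMap m ℂ ℂ).toContinuousLinearMap
  refine ⟨‖tr‖ * (b * a * b * x), fun z ⟨hz0, hzα⟩ => ?_⟩
  have hbz : ‖psdPow hB (z / 2)‖ ≤ b := hb _ <| by
    rw [Complex.div_ofNat_re]
    constructor <;> linarith
  have hxz : ‖psdPow hX (α - z)‖ ≤ x := hx _ <| by
    rw [Complex.sub_re, Complex.ofReal_re]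
    constructor <;> linarith
  exact tr.le_opNorm_of_le <|
    norm_mul_le_of_le (norm_mul_le_of_le (norm_mul_le_of_le hbz (ha z ⟨hz0, hzα⟩)) hbz) hxz

lemma norm_interpTrace_le_of_re_eq_zero {z : ℂ} (hz : z.re = 0) :
    ‖interpTrace hA hB hX α z‖ ≤ hsNormSq (psdPow hX (α / 2 : ℝ)) := by
  set S := psdPow hX (α / 2 : ℝ)
  set C := psdPow hB (z / 2) * psdPow hA z * psdPow hB (z / 2)
  have hhalf : ‖psdPow hB (z / 2)‖ ≤ 1 := norm_psdPow_le_one hB (by simp [hz])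
  have hC : ‖C‖ ≤ 1 := norm_mul_mul_le_one hhalf (norm_psdPow_le_one hA hz) hhalf
  have hD : ‖psdPow hX (-z)‖ ≤ 1 := norm_psdPow_le_one hX (by simp [hz])
  have hsplit : psdPow hX (α - z) = S * psdPow hX (-z) * Sᴴ := by
    rw [conjTranspose_psdPow_ofReal, ← psdPow_add, ← psdPow_add]
    congr 1
    push_cast
    ring
  have hF : interpTrace hA hB hX α z = (Sᴴ * C * S * psdPow hX (-z)).trace := by
    rw [interpTrace, hsplit, ← mul_assoc, trace_mul_comm]
    simp only [C, mul_assoc]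
  exact hF ▸ norm_trace_conjTranspose_mul_mul_mul_le_of_norm_le_one S hC hD

lemma norm_interpTrace_le_of_re_eq {z : ℂ} (hz : z.re = α) :
    ‖interpTrace hA hB hX α z‖ ≤ hsNormSq (psdPow hA (α / 2 : ℝ) * psdPow hB (α / 2 : ℝ)) := by
  set P := psdPow hA (α / 2 : ℝ)
  set Q := psdPow hB (α / 2 : ℝ)
  set U := psdPow hB ((z - α) / 2)
  set V := psdPow hA (z - α)
  set W := psdPow hX (α - z)
  have hU : ‖U‖ ≤ 1 := norm_psdPow_le_one hB (by simp [hz])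
  have hV : ‖V‖ ≤ 1 := norm_psdPow_le_one hA (by simp [hz])
  have hW : ‖W‖ ≤ 1 := norm_psdPow_le_one hX (by simp [hz])
  have hUQ : psdPow hB (z / 2) = U * Q := by
    rw [← psdPow_add]
    congr 1
    push_cast
    ring
  have hQU : psdPow hB (z / 2) = Q * U := by
    rw [hUQ, ← psdPow_add, ← psdPow_add, add_comm]
  have hPVP : psdPow hA z = P * V * P := by
    rw [← psdPow_add, ← psdPow_add]
    congr 1
    push_cast
    ring
  have hF : interpTrace hA hB hX α z = ((P * Q)ᴴ * V * (P * Q) * (U * W * U)).trace := by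
    calc interpTrace hA hB hX α z = (U * Q * (P * V * P) * (Q * U) * W).trace := by
          rw [interpTrace, ← hPVP, ← hUQ, ← hQU]
      _ = (U * (Q * P * V * (P * Q) * U * W)).trace := by simp only [mul_assoc]
      _ = ((P * Q)ᴴ * V * (P * Q) * (U * W * U)).trace := by
          rw [trace_mul_comm, conjTranspose_mul, conjTranspose_psdPow_ofReal,
            conjTranspose_psdPow_ofReal]
          simp only [P, Q, mul_assoc]
  exact hF ▸ norm_trace_conjTranspose_mul_mul_mul_le_of_norm_le_one (P * Q) hV
    (norm_mul_mul_le_one hU hW hU)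

theorem norm_trace_mul_psdPow_le (hα : 1 ≤ α) :
    ‖(psdPow hB (1 / 2 : ℝ) * A * psdPow hB (1 / 2 : ℝ) * psdPow hX (α - 1)).trace‖ ≤
      hsNormSq (psdPow hX (α / 2 : ℝ)) ^ (1 - 1 / α) *
        hsNormSq (psdPow hA (α / 2 : ℝ) * psdPow hB (α / 2 : ℝ)) ^ (1 / α) := by
  obtain ⟨C, hC⟩ := exists_norm_interpTrace_le hA hB hX α
  have hstrip := Complex.HadamardThreeLines.norm_le_interp_of_mem_verticalClosedStrip'
    (f := interpTrace hA hB hX α) (z := 1) (zero_lt_one.trans_le hα) ⟨zero_le_one, hα⟩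
    (differentiable_interpTrace hA hB hX α).diffContOnCl ⟨C, Set.forall_mem_image.2 hC⟩
    (fun _ => norm_interpTrace_le_of_re_eq_zero hA hB hX α)
    (fun _ => norm_interpTrace_le_of_re_eq hA hB hX α)
  simpa [interpTrace, psdPow_one] using hstrip

end Interpolation

theorem lieb_thirring_general {m : Type*} [Fintype m] [DecidableEq m] (A B : Matrix m m ℂ)
    (hA : A.PosSemidef) (hB : B.PosSemidef) (α : ℝ) (hα : 1 ≤ α) :
    (mpow (mpow B (1/2) * A * mpow B (1/2)) α).trace ≤
      (mpow B (α/2) * mpow A α * mpow B (α/2)).trace := by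
  have hα0 : 0 < α := zero_lt_one.trans_le hα
  rw [← psdPow_ofReal_eq_mpow hB one_half_pos.ne', ← psdPow_ofReal_eq_mpow hB (half_pos hα0).ne',
    ← psdPow_ofReal_eq_mpow hA hα0.ne']
  set X := psdPow hB (1 / 2 : ℝ) * A * psdPow hB (1 / 2 : ℝ) with hX_def
  have hX : X.PosSemidef := by
    simpa only [conjTranspose_psdPow_ofReal] using
      hA.mul_mul_conjTranspose_same (psdPow hB (1 / 2 : ℝ))
  have hX_mul : X * psdPow hX (α - 1) = psdPow hX α := by
    nth_rw 1 [← psdPow_one hX]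
    rw [← psdPow_add, add_sub_cancel]
  have hinterp := norm_trace_mul_psdPow_le hA hB hX α hα
  rw [← hX_def, hX_mul, trace_psdPow_eq_hsNormSq,
    Complex.norm_of_nonneg (hsNormSq_nonneg _)] at hinterp
  rw [← psdPow_ofReal_eq_mpow hX hα0.ne', trace_psdPow_eq_hsNormSq,
    trace_psdPow_mul_mul_eq_hsNormSq]
  exact_mod_cast le_of_le_rpow_one_sub_mul_rpow (hsNormSq_nonneg _) (hsNormSq_nonneg _)
    (one_div_pos.2 hα0) hinterp

theorem lieb_thirring {n : ℕ} (A B : Matrix (Fin n) (Fin n) ℂ)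
    (hA : A.PosSemidef) (hB : B.PosSemidef) (α : ℝ) (hα : 1 ≤ α) :
    (mpow (mpow B (1/2) * A * mpow B (1/2)) α).trace ≤
      (mpow B (α/2) * mpow A α * mpow B (α/2)).trace :=
  lieb_thirring_general A B hA hB α hα
end
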